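/- arXiv:2405.14432 — 2 statements merged into one kernel-verified Lean document; each statement's English description precedes it below -/
import Mathlib

section
/- Variance reduction under clipping, case ‖x̄‖ ≤ C: let x_1,…,x_m ∈ ℝ^d with mean x̄ satisfying ‖x̄‖ ≤ C, let yᵢ = clip_C(xᵢ) with mean ȳ, and S_c = {i : ‖xᵢ‖ > C}. Then (1/m)Σᵢ ‖yᵢ − ȳ‖² ≤ (1/m)Σᵢ ‖xᵢ − x̄‖² − (1/m)Σ_{i∈S_c}(‖xᵢ‖ − C)². -/
/-!
The mean minimises the sum of squared distances, so `ȳ` may be replaced by `x̄` on the left. Clipping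
is the metric projection onto the ball of radius `C`, which contains `x̄`; the obtuse-angle property
`⟪xᵢ - yᵢ, yᵢ - x̄⟫ ≥ 0` gives `‖yᵢ - x̄‖² + ‖xᵢ - yᵢ‖² ≤ ‖xᵢ - x̄‖²` for each `i`, where
`‖xᵢ - yᵢ‖ = ‖xᵢ‖ - C` if `‖xᵢ‖ > C` and `xᵢ = yᵢ` otherwise.
-/

open scoped Classical

noncomputable def clip {d : ℕ} (C : ℝ) (x : EuclideanSpace ℝ (Fin d)) :
    EuclideanSpace ℝ (Fin d) :=
  (min 1 (C / ‖x‖)) • x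

lemma clip_of_norm_le {d : ℕ} {C : ℝ} {x : EuclideanSpace ℝ (Fin d)} (h : ‖x‖ ≤ C) :
    clip C x = x := by
  unfold clip
  -- At `x = 0` the scaling factor is the junk value `min 1 (C / 0) = 0`, which does no harm.
  rcases eq_or_ne x 0 with rfl | hx
  · simp
  · have hn : 0 < ‖x‖ := norm_pos_iff.mpr hx
    rw [min_eq_left ((one_le_div hn).mpr h), one_smul]

/-- Clipping brings a point outside the ball of radius `C` closer to every point `c` of that ball,
and the squared distance drops by at least the squared distance to the ball. -/
lemma norm_clip_sub_sq_add_le {d : ℕ} {C : ℝ} (hC : 0 ≤ C) {x c : EuclideanSpace ℝ (Fin d)}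
    (h : C < ‖x‖) (hc : ‖c‖ ≤ C) :
    ‖clip C x - c‖ ^ 2 + (‖x‖ - C) ^ 2 ≤ ‖x - c‖ ^ 2 := by
  have hn : 0 < ‖x‖ := hC.trans_lt h
  have hle : C / ‖x‖ ≤ 1 := (div_le_one hn).mpr h.le
  unfold clip
  rw [min_eq_right hle, norm_sub_sq_real, norm_sub_sq_real, norm_smul, real_inner_smul_left,
    Real.norm_of_nonneg (div_nonneg hC hn.le), div_mul_cancel₀ _ hn.ne']
  have hxc : inner ℝ x c ≤ ‖x‖ * C :=
    (real_inner_le_norm x c).trans (mul_le_mul_of_nonneg_left hc hn.le)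
  have key := mul_nonneg (sub_nonneg.mpr hle) (sub_nonneg.mpr hxc)
  have hdiv : C / ‖x‖ * (‖x‖ * C) = C ^ 2 := by field_simp
  nlinarith

lemma sum_norm_sub_mean_sq_le {d m : ℕ} (hm : 0 < m) (y : Fin m → EuclideanSpace ℝ (Fin d))
    (c : EuclideanSpace ℝ (Fin d)) :
    ∑ i, ‖y i - (m : ℝ)⁻¹ • ∑ j, y j‖ ^ 2 ≤ ∑ i, ‖y i - c‖ ^ 2 := by
  set b := (m : ℝ)⁻¹ • ∑ j, y j with hb
  have hm' : (m : ℝ) ≠ 0 := by positivity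
  have hzero : ∑ i, (y i - b) = 0 := by
    rw [Finset.sum_sub_distrib, Finset.sum_const, Finset.card_univ, Fintype.card_fin,
      ← Nat.cast_smul_eq_nsmul ℝ, hb, smul_inv_smul₀ hm', sub_self]
  have hexp : ∀ i, ‖y i - c‖ ^ 2 = ‖y i - b‖ ^ 2 + 2 * inner ℝ (y i - b) (b - c) + ‖b - c‖ ^ 2 := by
    intro i
    rw [← norm_add_sq_real, sub_add_sub_cancel]
  simp_rw [hexp]
  rw [Finset.sum_add_distrib, Finset.sum_add_distrib, ← Finset.mul_sum, ← sum_inner, hzero,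
    inner_zero_left, mul_zero, add_zero]
  exact le_add_of_nonneg_right (Finset.sum_nonneg fun _ _ => sq_nonneg _)

theorem variance_reduction_small_mean {d m : ℕ} (hm : 0 < m) (C : ℝ) (hC : 0 ≤ C)
    (x : Fin m → EuclideanSpace ℝ (Fin d))
    (hxbar : ‖(m : ℝ)⁻¹ • ∑ j, x j‖ ≤ C) :
    (1 / (m : ℝ)) * ∑ i, ‖clip C (x i) - (m : ℝ)⁻¹ • ∑ j, clip C (x j)‖ ^ 2
      ≤ (1 / (m : ℝ)) * ∑ i, ‖x i - (m : ℝ)⁻¹ • ∑ j, x j‖ ^ 2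
        - (1 / (m : ℝ)) * ∑ i ∈ Finset.univ.filter (fun i => ‖x i‖ > C), (‖x i‖ - C) ^ 2 := by
  rw [← mul_sub]
  refine mul_le_mul_of_nonneg_left ?_ (by positivity)
  refine (sum_norm_sub_mean_sq_le hm _ ((m : ℝ)⁻¹ • ∑ j, x j)).trans ?_
  rw [Finset.sum_filter, ← Finset.sum_sub_distrib]
  refine Finset.sum_le_sum fun i _ => ?_
  split_ifs with h
  · exact le_sub_iff_add_le.mpr (norm_clip_sub_sq_add_le hC h hxbar)
  · rw [clip_of_norm_le (not_lt.mp h), sub_zero]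
end

section
/- Bounded output of ARC: let F be any aggregation rule satisfying ‖F(z_1,…,z_n)‖ ≤ max_i ‖z_i‖ for all inputs. Then for any x_1,…,x_n ∈ ℝ^d and any S ⊆ [n] with |S| = n−f (where 0 ≤ f < n/2), ‖F(ARC(x_1,…,x_n))‖ ≤ max_{i∈S} ‖x_i‖. -/
lemma norm_clip_le {d : ℕ} {C : ℝ} (hC : 0 ≤ C) (x : EuclideanSpace ℝ (Fin d)) :
    ‖clip C x‖ ≤ C := by
  have h0 : 0 ≤ min 1 (C / ‖x‖) := le_min zero_le_one (by positivity)
  rw [clip, norm_smul, Real.norm_of_nonneg h0]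
  calc min 1 (C / ‖x‖) * ‖x‖ ≤ C / ‖x‖ * ‖x‖ := by gcongr; exact min_le_right _ _
    _ ≤ C := by
      -- For `x = 0` the quotient is `0`, and the bound is `0 ≤ C`.
      rcases (norm_nonneg x).eq_or_lt with h | h
      · simpa [← h] using hC
      · rw [div_mul_cancel₀ _ h.ne']

lemma le_clipCount {n f : ℕ} (hnf : 2 * f < n) :
    f ≤ Nat.floor ((2 * (f : ℚ) / n) * ((n : ℚ) - f)) := by
  have hn : (0 : ℚ) < n := by exact_mod_cast (by omega : 0 < n)
  have h : 2 * (f : ℚ) < n := by exact_mod_cast hnf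
  have hf : (0 : ℚ) ≤ f := f.cast_nonneg
  apply Nat.le_floor
  rw [div_mul_eq_mul_div, le_div_iff₀ hn]
  nlinarith

/-- The strict bound makes the reduction modulo `n` in the index of the clipping level vacuous. -/
lemma clipCount_lt {n f : ℕ} (hnf : 2 * f < n) :
    Nat.floor ((2 * (f : ℚ) / n) * ((n : ℚ) - f)) < n := by
  have hn : (0 : ℚ) < n := by exact_mod_cast (by omega : 0 < n)
  have h : 2 * (f : ℚ) < n := by exact_mod_cast hnf
  have hf : (0 : ℚ) ≤ f := f.cast_nonneg
  rw [Nat.floor_lt' (by omega), div_mul_eq_mul_div, div_lt_iff₀ hn]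
  nlinarith

/-- Bounded output of ARC: if `F` never exceeds the largest input norm, then
`F ∘ ARC` is bounded by the largest norm over any subset `S` of size `n - f`. -/
theorem arc_bounded_output {d n f : ℕ} (hnf : 2 * f < n)
    (F : (Fin n → EuclideanSpace ℝ (Fin d)) → EuclideanSpace ℝ (Fin d))
    (hF : ∀ z : Fin n → EuclideanSpace ℝ (Fin d),
      ‖F z‖ ≤ Finset.univ.sup' ⟨⟨0, by omega⟩, Finset.mem_univ _⟩ (fun i => ‖z i‖))
    (x : Fin n → EuclideanSpace ℝ (Fin d)) (π : Equiv.Perm (Fin n))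
    (hsort : ∀ i j : Fin n, i ≤ j → ‖x (π j)‖ ≤ ‖x (π i)‖)
    (S : Finset (Fin n)) (hS : S.card = n - f) :
    ‖F (fun i =>
          clip (‖x (π ⟨(Nat.floor ((2 * (f : ℚ) / n) * ((n : ℚ) - f))) % n,
                  Nat.mod_lt _ (by omega)⟩)‖) (x i))‖
      ≤ S.sup' (Finset.card_pos.mp (by rw [hS]; omega)) (fun i => ‖x i‖) := by
  refine (hF _).trans ((Finset.sup'_le _ _ fun i _ => norm_clip_le (norm_nonneg _) _).trans ?_)
  have hfk := le_clipCount hnf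
  have hkn := clipCount_lt hnf
  simp only [Nat.mod_eq_of_lt hkn]
  generalize Nat.floor ((2 * (f : ℚ) / n) * ((n : ℚ) - f)) = k at hfk hkn ⊢
  -- The `k + 1` indices sorted first are too many to avoid `S`.
  obtain ⟨i, hi⟩ : (((Finset.Iic (⟨k, hkn⟩ : Fin n)).map π.toEmbedding) ∩ S).Nonempty := by
    apply Finset.inter_nonempty_of_card_lt_card_add_card (Finset.subset_univ _)
      (Finset.subset_univ _)
    rw [Finset.card_map, Fin.card_Iic, hS, Finset.card_univ, Fintype.card_fin]
    dsimp only
    omega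
  obtain ⟨hiT, hiS⟩ := Finset.mem_inter.mp hi
  obtain ⟨j, hj, rfl⟩ := Finset.mem_map.mp hiT
  exact (hsort j _ (Finset.mem_Iic.mp hj)).trans
    (Finset.le_sup' (fun i => ‖x i‖) hiS)
end
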